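/- arXiv:math/9401203 — 2 statements merged into one kernel-verified Lean document; each statement's English description precedes it below -/
import Mathlib

section
/- Let X be a regular (T3) topological space. If there is a neighbourhood assignment f on X such that D_G^f is a discrete subspace of X for every open G ⊆ X, then X has an irreducible base. -/
open TopologicalSpace Cardinal Set

universe u

section Defs

variable {X : Type u} [TopologicalSpace X]

/-- `B` is a neighbourhood base of `x`: members are open sets containing `x`,
and every open set containing `x` contains a member of `B`. -/
def NbhdBasisAt (B : Set (Set X)) (x : X) : Prop :=
  (∀ U ∈ B, IsOpen U ∧ x ∈ U) ∧ ∀ V : Set X, IsOpen V → x ∈ V → ∃ U ∈ B, U ⊆ V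

/-- The family `F` contains a neighbourhood base of `x`. -/
def ContainsNbhdBasisAt (F : Set (Set X)) (x : X) : Prop :=
  ∀ V : Set X, IsOpen V → x ∈ V → ∃ U ∈ F, x ∈ U ∧ U ⊆ V

/-- Property (*) of a decomposition. -/
def StarProperty (𝒲 : X → Set (Set X)) : Prop :=
  ∀ x y : X, x ≠ y → ∀ U ∈ 𝒲 x, ∀ V ∈ 𝒲 y, x ∈ V → y ∈ U → (V \ U).Nonempty

/-- `𝒰` is an irreducible decomposition of a base of `X`. -/
def IsIrreducibleDecomp (𝒰 : X → Set (Set X)) : Prop :=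
  IsTopologicalBasis (⋃ x, 𝒰 x) ∧ (∀ x, NbhdBasisAt (𝒰 x) x) ∧
    ∀ x : X, ¬ ContainsNbhdBasisAt (⋃ y ∈ {y : X | y ≠ x}, 𝒰 y) x

def HasIrreducibleBase (X : Type u) [TopologicalSpace X] : Prop :=
  ∃ 𝒰 : X → Set (Set X), IsIrreducibleDecomp 𝒰

/-- `f` is a neighbourhood assignment on `Y`. -/
def IsNbhdAssignment (Y : Set X) (f : X → Set X) : Prop :=
  ∀ y ∈ Y, IsOpen (f y) ∧ y ∈ f y

/-- `D_N^f = { y ∈ Y : y ∈ N ⊆ f y }`. -/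
def Dset (Y : Set X) (f : X → Set X) (N : Set X) : Set X :=
  {y | y ∈ Y ∧ y ∈ N ∧ N ⊆ f y}

/-- `Y` is weakly separated (as a subspace of `X`). -/
def WeaklySeparatedSub (Y : Set X) : Prop :=
  ∃ f : X → Set X, IsNbhdAssignment Y f ∧
    ∀ y ∈ Y, ∀ z ∈ Y, y ≠ z → y ∉ f z ∨ z ∉ f y

/-- `Z` is pseudo weakly separated: it contains a weakly separated subspace of the
same cardinality. -/
def PseudoWeaklySeparated (Z : Set X) : Prop :=
  ∃ W ⊆ Z, #W = #Z ∧ WeaklySeparatedSub W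

/-- The weight of a space: least cardinality of a base. -/
noncomputable def weight (X : Type u) [TopologicalSpace X] : Cardinal.{u} :=
  sInf {c | ∃ B : Set (Set X), IsTopologicalBasis B ∧ c = #B}

/-- The character of `X` at `x`: least cardinality of a neighbourhood base at `x`. -/
noncomputable def charAt (x : X) : Cardinal.{u} :=
  sInf {c | ∃ B : Set (Set X), NbhdBasisAt B x ∧ c = #B}

/-- The character of `X`. -/
noncomputable def character (X : Type u) [TopologicalSpace X] : Cardinal.{u} :=
  ⨆ x : X, charAt x

/-- `N` is a network of `X`. -/
def IsNetwork (N : Set (Set X)) : Prop :=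
  ∀ x : X, ∀ U : Set X, IsOpen U → x ∈ U → ∃ M ∈ N, x ∈ M ∧ M ⊆ U

/-- The net weight of `X`: least cardinality of a network. -/
noncomputable def netWeight (X : Type u) [TopologicalSpace X] : Cardinal.{u} :=
  sInf {c | ∃ N : Set (Set X), IsNetwork N ∧ c = #N}

/-- Tkačenko's cardinal function `R`. -/
noncomputable def Rinv (X : Type u) [TopologicalSpace X] : Cardinal.{u} :=
  sSup {c | ∃ Y : Set X, WeaklySeparatedSub Y ∧ c = #Y}

/-- `S` is right-separated: it carries a well-ordering in which every point has an
open neighbourhood avoiding all later points of `S`. -/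
def RightSeparated (S : Set X) : Prop :=
  ∃ r : S → S → Prop, IsWellOrder S r ∧
    ∀ x : S, ∃ U : Set X, IsOpen U ∧ (x : X) ∈ U ∧ ∀ y : S, r x y → (y : X) ∉ U

end Defs

/-- for a regular (T3) space, a neighbourhood assignment making every
`D_G^f` discrete yields an irreducible base. -/
theorem statement6 {X : Type u} [TopologicalSpace X] [T3Space X]
    (f : X → Set X) (hf : ∀ x, IsOpen (f x) ∧ x ∈ f x)
    (hd : ∀ G : Set X, IsOpen G → ∀ x ∈ Dset Set.univ f G,
      ∃ U : Set X, IsOpen U ∧ x ∈ U ∧ U ∩ Dset Set.univ f G ⊆ {x}) :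
    HasIrreducibleBase X := by
  classical
  -- regular open refinement of the assignment
  have hg0 : ∀ x, ∃ N : Set X, IsOpen N ∧ x ∈ N ∧ N ⊆ f x ∧ interior (closure N) ⊆ N := by
    intro x
    obtain ⟨t, ht, htc, htf⟩ := exists_mem_nhds_isClosed_subset ((hf x).1.mem_nhds (hf x).2)
    refine ⟨interior t, isOpen_interior, mem_interior_iff_mem_nhds.2 ht,
      interior_subset.trans htf, ?_⟩
    exact interior_mono (closure_minimal interior_subset htc)
  choose n hno hnx hnf hnr using hg0
  let g : X → Set X := fun x => if IsOpen ({x} : Set X) then {x} else n x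
  have hg1 : ∀ x, IsOpen ({x} : Set X) → g x = {x} := fun x h => if_pos h
  have hg2 : ∀ x, ¬ IsOpen ({x} : Set X) → g x = n x := fun x h => if_neg h
  have hgx : ∀ x, x ∈ g x := by
    intro x
    by_cases h : IsOpen ({x} : Set X)
    · rw [hg1 x h]; rfl
    · rw [hg2 x h]; exact hnx x
  have hgo : ∀ x, IsOpen (g x) := by
    intro x
    by_cases h : IsOpen ({x} : Set X)
    · rw [hg1 x h]; exact h
    · rw [hg2 x h]; exact hno x
  let 𝒰 : X → Set (Set X) := fun y =>
    {U | IsOpen U ∧ y ∈ U ∧ ∀ x, x ≠ y → x ∈ U → ¬ U ⊆ g x}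
  have key : ∀ y : X, ∀ V : Set X, IsOpen V → y ∈ V → ∃ U ∈ 𝒰 y, U ⊆ V := by
    intro y V hV hy
    by_cases hiso : IsOpen ({y} : Set X)
    · exact ⟨{y}, ⟨hiso, rfl, fun x hx hxy => absurd hxy hx⟩, by simpa using hy⟩
    let W := V ∩ n y
    have hW : IsOpen W := hV.inter (hno y)
    have hyW : y ∈ W := ⟨hy, hnx y⟩
    let E : Set X := {x | x ≠ y ∧ ¬ IsOpen ({x} : Set X) ∧ x ∈ W ∧ W ⊆ n x}
    have hED : E ⊆ Dset Set.univ f W := fun x hx => ⟨trivial, hx.2.2.1, hx.2.2.2.trans (hnf x)⟩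
    have hyE : y ∉ closure E := by
      obtain ⟨O, hO, hyO, hs⟩ := hd W hW y ⟨trivial, hyW, inter_subset_right.trans (hnf y)⟩
      intro hc
      obtain ⟨z, hzO, hzE⟩ := mem_closure_iff.1 hc O hO hyO
      exact hzE.1 (hs ⟨hzO, hED hzE⟩)
    have hEnd : interior (closure E) = ∅ := by
      by_contra hne
      obtain ⟨p, hp⟩ := Set.nonempty_iff_ne_empty.2 hne
      obtain ⟨d, hdi, hdE⟩ := mem_closure_iff.1 (interior_subset hp) _ isOpen_interior hp
      obtain ⟨O, hO, hdO, hs⟩ := hd W hW d (hED hdE)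
      apply hdE.2.1
      have hO' : IsOpen (O ∩ interior (closure E)) := hO.inter isOpen_interior
      convert hO'
      refine Subset.antisymm (by rintro _ rfl; exact ⟨hdO, hdi⟩) ?_
      intro q hq
      by_contra hqd
      obtain ⟨z, hz, hzE⟩ := mem_closure_iff.1 (interior_subset hq.2)
        ((O ∩ interior (closure E)) ∩ {d}ᶜ) (hO'.inter isOpen_compl_singleton) ⟨hq, hqd⟩
      exact hz.2 (hs ⟨hz.1.1, hED hzE⟩)
    refine ⟨W \ closure E, ⟨hW.sdiff isClosed_closure, ⟨hyW, hyE⟩, ?_⟩,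
      diff_subset.trans inter_subset_left⟩
    intro x hxy hxU hsub
    by_cases hx : IsOpen ({x} : Set X)
    · rw [hg1 x hx] at hsub
      exact hxy (hsub ⟨hyW, hyE⟩).symm
    rw [hg2 x hx] at hsub
    have hWc : W ⊆ closure (n x) := by
      have hdense : Dense (closure E)ᶜ := interior_eq_empty_iff_dense_compl.1 hEnd
      exact (hdense.open_subset_closure_inter hW).trans (closure_mono hsub)
    have hWn : W ⊆ n x := (interior_maximal hWc hW).trans (hnr x)
    exact hxU.2 (subset_closure ⟨hxy, hx, hxU.1, hWn⟩)
  refine ⟨𝒰, ?_, fun x => ⟨fun U hU => ⟨hU.1, hU.2.1⟩, key x⟩, ?_⟩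
  · apply isTopologicalBasis_of_isOpen_of_nhds
    · intro U hU
      obtain ⟨x, hx⟩ := mem_iUnion.1 hU
      exact hx.1
    · intro a V ha hV
      obtain ⟨U, hU, hUV⟩ := key a V hV ha
      exact ⟨U, mem_iUnion.2 ⟨a, hU⟩, hU.2.1, hUV⟩
  · intro x hc
    obtain ⟨U, hU, hxU, hUg⟩ := hc (g x) (hgo x) (hgx x)
    simp only [mem_iUnion] at hU
    obtain ⟨y, hy, hU⟩ := hU
    exact hU.2.2 x (Ne.symm hy) hxU hUg
end

section
/- The following are equivalent for a regular topological space X: (1) X has an irreducible base; (2) there is a neighbourhood assignment f on X such that D_G^f is closed and discrete in G for every open G ⊆ X; (3) there is a neighbourhood assignment f on X such that D_G^f is a discrete subspace of X for every open G ⊆ X. -/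
open TopologicalSpace Cardinal Set

universe u

/-- Every point of `G` has a neighbourhood meeting `D_G^f` in at most that point. -/
def LocSep {X : Type u} [TopologicalSpace X] (f : X → Set X) : Prop :=
  ∀ G : Set X, IsOpen G → ∀ p ∈ G,
    ∃ U : Set X, IsOpen U ∧ p ∈ U ∧ ∀ q ∈ U, q ∈ G → G ⊆ f q → q = p

theorem locSep_of_irreducible {X : Type u} [TopologicalSpace X] (h : HasIrreducibleBase X) :
    ∃ f : X → Set X, (∀ x, IsOpen (f x) ∧ x ∈ f x) ∧ LocSep f := by
  obtain ⟨B, -, hn, hi⟩ := h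
  simp only [ContainsNbhdBasisAt, not_forall] at hi
  choose f hf hx hno using hi
  refine ⟨f, fun x => ⟨hf x, hx x⟩, ?_⟩
  intro G hG p hp
  obtain ⟨U, hU, hUG⟩ := (hn p).2 G hG hp
  refine ⟨U, ((hn p).1 U hU).1, ((hn p).1 U hU).2, ?_⟩
  intro q hq hqG hGf
  by_contra hne
  refine hno q ⟨U, ?_, hq, hUG.trans hGf⟩
  simp only [mem_iUnion]
  exact ⟨p, fun h => hne h.symm, hU⟩

theorem locSep_of_discrete {X : Type u} [TopologicalSpace X] (f : X → Set X)
    (hf : ∀ x, IsOpen (f x) ∧ x ∈ f x)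
    (h : ∀ G : Set X, IsOpen G → ∀ x ∈ Dset Set.univ f G,
          ∃ U : Set X, IsOpen U ∧ x ∈ U ∧ U ∩ Dset Set.univ f G ⊆ {x}) : LocSep f := by
  intro G hG p hp
  obtain ⟨U, hU, hpU, hs⟩ := h (G ∩ f p) (hG.inter (hf p).1) p
    ⟨mem_univ _, ⟨hp, (hf p).2⟩, inter_subset_right⟩
  refine ⟨U ∩ f p, hU.inter (hf p).1, ⟨hpU, (hf p).2⟩, ?_⟩
  intro q hq hqG hGq
  exact hs ⟨hq.1, mem_univ _, ⟨hqG, hq.2⟩, inter_subset_left.trans hGq⟩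

theorem closedDiscrete_of_locSep {X : Type u} [TopologicalSpace X] (f : X → Set X)
    (h : LocSep f) (G : Set X) (hG : IsOpen G) :
    (closure (Dset Set.univ f G) ∩ G ⊆ Dset Set.univ f G) ∧
      (∀ x ∈ Dset Set.univ f G,
        ∃ U : Set X, IsOpen U ∧ x ∈ U ∧ U ∩ Dset Set.univ f G ⊆ {x}) := by
  constructor
  · rintro p ⟨hp, hpG⟩
    obtain ⟨U, hU, hpU, hs⟩ := h G hG p hpG
    obtain ⟨q, hqU, hq⟩ := mem_closure_iff.1 hp U hU hpU
    have := hs q hqU hq.2.1 hq.2.2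
    exact this ▸ hq
  · intro p hp
    obtain ⟨U, hU, hpU, hs⟩ := h G hG p hp.2.1
    exact ⟨U, hU, hpU, fun q hq => hs q hq.1 hq.2.2.1 hq.2.2.2⟩

theorem irreducible_of_locSep {X : Type u} [TopologicalSpace X] [T3Space X] (f₀ : X → Set X)
    (hf₀ : ∀ x, IsOpen (f₀ x) ∧ x ∈ f₀ x) (h₀ : LocSep f₀) : HasIrreducibleBase X := by
  classical
  -- shrink `f₀` at the isolated points
  obtain ⟨f, hf, h, hiso⟩ : ∃ f : X → Set X, (∀ x, IsOpen (f x) ∧ x ∈ f x) ∧ LocSep f ∧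
      ∀ x, IsOpen ({x} : Set X) → f x = {x} := by
    refine ⟨fun x => if IsOpen ({x} : Set X) then {x} else f₀ x, ?_, ?_, ?_⟩
    · intro x
      by_cases hx : IsOpen ({x} : Set X)
      · simp [hx]
      · simpa [hx] using hf₀ x
    · intro G hG p hp
      obtain ⟨U, hU, hpU, hs⟩ := h₀ G hG p hp
      refine ⟨U, hU, hpU, fun q hq hqG hGq => hs q hq hqG (hGq.trans ?_)⟩
      by_cases hx : IsOpen ({q} : Set X)
      · simpa [hx] using (hf₀ q).2
      · simp [hx]
    · intro x hx
      simp [hx]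
  have hreg : ∀ x, ∃ g : Set X, IsOpen g ∧ x ∈ g ∧ closure g ⊆ f x := by
    intro x
    obtain ⟨t, ht, htc, hts⟩ := exists_mem_nhds_isClosed_subset ((hf x).1.mem_nhds (hf x).2)
    exact ⟨interior t, isOpen_interior, mem_interior_iff_mem_nhds.2 ht,
      (closure_minimal interior_subset htc).trans hts⟩
  choose g hgo hxg hgf using hreg
  have hbase : ∀ y, ∀ W : Set X, IsOpen W → y ∈ W →
      ∃ V : Set X, (IsOpen V ∧ y ∈ V ∧ ∀ x ∈ V, V ⊆ g x → x = y) ∧ V ⊆ W := by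
    intro y W hW hy
    refine ⟨{z | z ∈ W ∧ (W ⊆ f z → z = y)}, ⟨?_, ⟨hy, fun _ => rfl⟩, ?_⟩, fun z hz => hz.1⟩
    · rw [isOpen_iff_forall_mem_open]
      rintro p ⟨hpW, hp⟩
      obtain ⟨U, hU, hpU, hs⟩ := h W hW p hpW
      refine ⟨U ∩ W, ?_, hU.inter hW, hpU, hpW⟩
      rintro q ⟨hqU, hqW⟩
      refine ⟨hqW, fun hWq => ?_⟩
      have hqp := hs q hqU hqW hWq
      subst hqp
      exact hp hWq
    · rintro x ⟨hxW, hx⟩ hVg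
      apply hx
      have hcl : W ⊆ closure {z | z ∈ W ∧ (W ⊆ f z → z = y)} := by
        intro z hz
        by_cases hzV : W ⊆ f z → z = y
        · exact subset_closure ⟨hz, hzV⟩
        push Not at hzV
        obtain ⟨hWz, hzy⟩ := hzV
        rw [mem_closure_iff]
        intro O hO hzO
        obtain ⟨U, hU, hzU, hs⟩ := h W hW z hz
        by_contra hemp
        have hsing : O ∩ U ∩ W = {z} := by
          apply Subset.antisymm
          · rintro q ⟨⟨hqO, hqU⟩, hqW⟩
            by_contra hne
            exact hemp ⟨q, hqO, hqW, fun hWq => absurd (hs q hqU hqW hWq) hne⟩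
          · rintro q rfl
            exact ⟨⟨hzO, hzU⟩, hz⟩
        have hzo : IsOpen ({z} : Set X) := hsing ▸ (hO.inter hU).inter hW
        have := hWz hy
        rw [hiso z hzo] at this
        exact hzy this.symm
      exact hcl.trans ((closure_mono hVg).trans (hgf x))
  refine ⟨fun y => {V | IsOpen V ∧ y ∈ V ∧ ∀ x ∈ V, V ⊆ g x → x = y}, ?_, ?_, ?_⟩
  · apply isTopologicalBasis_of_isOpen_of_nhds
    · intro V hV
      obtain ⟨y, hy⟩ := mem_iUnion.1 hV
      exact hy.1
    · intro y W hy hW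
      obtain ⟨V, hV, hVW⟩ := hbase y W hW hy
      exact ⟨V, mem_iUnion.2 ⟨y, hV⟩, hV.2.1, hVW⟩
  · intro y
    exact ⟨fun V hV => ⟨hV.1, hV.2.1⟩, fun W hW hy => hbase y W hW hy⟩
  · intro x hc
    obtain ⟨V, hV, hxV, hVg⟩ := hc (g x) (hgo x) (hxg x)
    simp only [mem_iUnion] at hV
    obtain ⟨y, hyx, hV⟩ := hV
    exact hyx (hV.2.2 x hxV hVg).symm

/-- for a regular (T3) space the three conditions are equivalent. -/
theorem statement7 {X : Type u} [TopologicalSpace X] [T3Space X] :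
    (HasIrreducibleBase X ↔
      ∃ f : X → Set X, (∀ x, IsOpen (f x) ∧ x ∈ f x) ∧
        ∀ G : Set X, IsOpen G →
          (closure (Dset Set.univ f G) ∩ G ⊆ Dset Set.univ f G) ∧
          (∀ x ∈ Dset Set.univ f G,
            ∃ U : Set X, IsOpen U ∧ x ∈ U ∧ U ∩ Dset Set.univ f G ⊆ {x})) ∧
    ((∃ f : X → Set X, (∀ x, IsOpen (f x) ∧ x ∈ f x) ∧
        ∀ G : Set X, IsOpen G →
          (closure (Dset Set.univ f G) ∩ G ⊆ Dset Set.univ f G) ∧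
          (∀ x ∈ Dset Set.univ f G,
            ∃ U : Set X, IsOpen U ∧ x ∈ U ∧ U ∩ Dset Set.univ f G ⊆ {x})) ↔
      ∃ f : X → Set X, (∀ x, IsOpen (f x) ∧ x ∈ f x) ∧
        ∀ G : Set X, IsOpen G → ∀ x ∈ Dset Set.univ f G,
          ∃ U : Set X, IsOpen U ∧ x ∈ U ∧ U ∩ Dset Set.univ f G ⊆ {x}) := by
  refine ⟨⟨?_, ?_⟩, ⟨?_, ?_⟩⟩
  · intro h
    obtain ⟨f, hf, hs⟩ := locSep_of_irreducible h
    exact ⟨f, hf, fun G hG => closedDiscrete_of_locSep f hs G hG⟩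
  · rintro ⟨f, hf, h⟩
    exact irreducible_of_locSep f hf (locSep_of_discrete f hf fun G hG => (h G hG).2)
  · rintro ⟨f, hf, h⟩
    exact ⟨f, hf, fun G hG => (h G hG).2⟩
  · rintro ⟨f, hf, h⟩
    exact ⟨f, hf, fun G hG =>
      closedDiscrete_of_locSep f (locSep_of_discrete f hf h) G hG⟩
end
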